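/- arXiv:2411.15088 — 2 statements merged into one kernel-verified Lean document; each statement's English description precedes it below -/
import Mathlib

section
/- Let G be a finite simple graph with n vertices, m edges, girth g (so G contains a cycle, and g > 2 is the length of its shortest cycle), and n_g cycles of length g. Writing the chromatic polynomial as P_G(λ) = Σ_{i} c_{n−i} λ^{n−i}, the first g coefficients satisfy: c_{n−i} = (−1)^i · C(m, i) for all 0 ≤ i < g − 1, and c_{n−(g−1)} = (−1)^{g−1} · (C(m, g−1) − n_g), where C(m, i) denotes the binomial coefficient m choose i. -/
open Polynomial

/-- The number of proper colorings of the finite simple graph `G` with `k` colors. -/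
def SimpleGraph.numColorings {V : Type*} [Fintype V] [DecidableEq V]
    (G : SimpleGraph V) [DecidableRel G.Adj] (k : ℕ) : ℕ :=
  Fintype.card {f : V → Fin k // ∀ a b, G.Adj a b → f a ≠ f b}

/-- The number of cycles of length `g` in `G`, i.e. the number of cycle subgraphs of `G`
with `g` vertices (a cycle graph being a connected graph in which every vertex has
exactly two neighbors). -/
noncomputable def SimpleGraph.cycleCount {V : Type*} (G : SimpleGraph V) (g : ℕ) : ℕ :=
  Nat.card {H : G.Subgraph //
    Nat.card H.verts = g ∧ H.coe.Connected ∧ ∀ v, Nat.card (H.coe.neighborSet v) = 2}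

/-!
By Whitney's expansion, `P(k) = ∑_{A ⊆ E} (-1)^|A| k^{c(A)}`, where `c(A)` is the number of
components of `(V, A)`; so the coefficient of `λ^{n-i}` collects the sets with `c(A) = n - i`.
A set with fewer than `g` edges is a forest, so `c(A) = n - |A|`. A set with exactly `g` edges is
either a forest or the edge set of a `g`-cycle, and then `c(A) = n - g + 1`. A set with more than
`g` edges contains a forest with `g` edges, so `c(A) ≤ n - g`, and it does not contribute: otherwise
deleting any edge from some `g + 1` of its edges leaves a cycle, all of whose degrees are even, so
that every deleted edge would join exactly the vertices of odd degree.
-/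

open SimpleGraph Finset

namespace ChromaticPolynomial

variable {V : Type*}

theorem eq_of_reachable {β : Type*} {H : SimpleGraph V} {f : V → β}
    (hf : ∀ a b, H.Adj a b → f a = f b) {a b : V} (hab : H.Reachable a b) : f a = f b := by
  obtain ⟨p⟩ := hab
  induction p with
  | nil => rfl
  | cons hadj _ ih => exact (hf _ _ hadj).trans ih

/-- A coloring that is constant along the edges of `H` amounts to a coloring of the connected
components of `H`. -/
def constOnAdjEquiv (H : SimpleGraph V) (β : Type*) :
    {f : V → β // ∀ a b, H.Adj a b → f a = f b} ≃ (H.ConnectedComponent → β) where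
  toFun f := fun c ↦ c.lift f.1 fun _ _ p _ ↦ eq_of_reachable f.2 p.reachable
  invFun h := ⟨fun v ↦ h (H.connectedComponentMk v),
    fun _ _ hab ↦ congrArg h (ConnectedComponent.connectedComponentMk_eq_of_adj hab)⟩
  left_inv _ := rfl
  right_inv _ := funext <| ConnectedComponent.ind fun _ ↦ rfl

/-- The graph `(V, A)` with an edge set `A ⊆ Sym2 V`; loops in `A` are ignored. -/
abbrev spanningGraph (A : Finset (Sym2 V)) : SimpleGraph V :=
  fromEdgeSet (A : Set (Sym2 V))

theorem forall_isDiag_map_iff {β : Type*} (A : Finset (Sym2 V)) (f : V → β) :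
    (∀ e ∈ A, (e.map f).IsDiag) ↔ ∀ a b, (spanningGraph A).Adj a b → f a = f b := by
  simp only [Sym2.forall, Sym2.map_mk, Sym2.mk_isDiag_iff, fromEdgeSet_adj, mem_coe]
  grind

section Whitney

variable [Fintype V] [DecidableEq V]

theorem card_monochromatic (A : Finset (Sym2 V)) (k : ℕ) :
    #{f : V → Fin k | ∀ e ∈ A, (e.map f).IsDiag} =
      k ^ Nat.card (spanningGraph A).ConnectedComponent := by
  rw [← Fintype.card_subtype, ← Nat.card_eq_fintype_card,
    Nat.card_congr ((Equiv.subtypeEquivRight (forall_isDiag_map_iff A)).trans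
      (constOnAdjEquiv _ _)), Nat.card_fun, Nat.card_fin]

variable (G : SimpleGraph V) [DecidableRel G.Adj]

theorem numColorings_eq_card_inf_compl (k : ℕ) :
    G.numColorings k =
      #(G.edgeFinset.inf fun e ↦ ({f : V → Fin k | (e.map f).IsDiag} : Finset _)ᶜ) := by
  rw [numColorings, Fintype.card_subtype]
  congr 1
  ext f
  simp [mem_inf, Sym2.forall]

theorem numColorings_eq_sum (k : ℕ) :
    (G.numColorings k : ℤ) = ∑ A ∈ G.edgeFinset.powerset,
      (-1) ^ #A * (k : ℤ) ^ Nat.card (spanningGraph A).ConnectedComponent := by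
  rw [numColorings_eq_card_inf_compl, inclusion_exclusion_card_inf_compl]
  refine sum_congr rfl fun A _ ↦ ?_
  have hinf : (A.inf fun e ↦ ({f | (e.map f).IsDiag} : Finset (V → Fin k))) =
      ({f | ∀ e ∈ A, (e.map f).IsDiag} : Finset (V → Fin k)) := by
    ext f
    simp [mem_inf]
  rw [hinf, card_monochromatic, Nat.cast_pow]

variable {G} {P : ℤ[X]}

theorem eq_sum_of_eval_eq_numColorings (hP : ∀ k : ℕ, P.eval (k : ℤ) = G.numColorings k) :
    P = ∑ A ∈ G.edgeFinset.powerset,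
      C ((-1) ^ #A) * X ^ Nat.card (spanningGraph A).ConnectedComponent := by
  refine eq_of_infinite_eval_eq _ _ <|
    (Set.infinite_range_of_injective (Nat.cast_injective (R := ℤ))).mono ?_
  rintro _ ⟨k, rfl⟩
  simp [hP, numColorings_eq_sum, eval_finsetSum]

theorem coeff_eq_sum (hP : ∀ k : ℕ, P.eval (k : ℤ) = G.numColorings k) (j : ℕ) :
    P.coeff j = ∑ A ∈ G.edgeFinset.powerset
      with Nat.card (spanningGraph A).ConnectedComponent = j, (-1) ^ #A := by
  rw [eq_sum_of_eval_eq_numColorings hP, finsetSum_coeff, sum_filter]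
  simp only [coeff_C_mul_X_pow, eq_comm]

end Whitney

section Forests

variable {H : SimpleGraph V}

theorem reachable_of_reachable_sup_edge {u v x y : V} (h : (H ⊔ edge u v).Reachable x y) :
    H.Reachable x y ∨
      (H.Reachable x u ∨ H.Reachable x v) ∧ (H.Reachable y u ∨ H.Reachable y v) := by
  obtain ⟨p⟩ := h
  induction p with
  | nil => exact .inl .rfl
  | cons hadj _ ih =>
    rw [sup_adj, edge_adj] at hadj
    grind [Reachable.trans, Reachable.symm, Reachable.refl, Adj.reachable]

theorem card_connectedComponent_sup_edge [Finite V] {u v : V} (huv : ¬ H.Reachable u v) :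
    Nat.card (H ⊔ edge u v).ConnectedComponent + 1 = Nat.card H.ConnectedComponent := by
  classical
  let merge (c : {c : H.ConnectedComponent // c ≠ H.connectedComponentMk v}) :
      (H ⊔ edge u v).ConnectedComponent := c.1.map (.ofLE le_sup_left)
  have hadj : (H ⊔ edge u v).Adj u v := by
    rw [sup_adj, edge_adj]
    grind [Reachable.refl]
  have merge_injective : merge.Injective := by
    rintro ⟨⟨x⟩, hx⟩ ⟨⟨y⟩, hy⟩ hxy
    have hx' : ¬ H.Reachable x v := fun h ↦ hx (ConnectedComponent.sound h)
    have hy' : ¬ H.Reachable y v := fun h ↦ hy (ConnectedComponent.sound h)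
    refine Subtype.ext (ConnectedComponent.sound ?_)
    rcases reachable_of_reachable_sup_edge (ConnectedComponent.exact hxy) with h | ⟨hxu, hyu⟩
    · exact h
    · exact (hxu.resolve_right hx').trans (hyu.resolve_right hy').symm
  have merge_surjective : merge.Surjective := by
    rintro ⟨x⟩
    by_cases hx : H.Reachable x v
    · exact ⟨⟨H.connectedComponentMk u, fun h ↦ huv (ConnectedComponent.exact h)⟩,
        ConnectedComponent.sound (hadj.reachable.trans (hx.mono le_sup_left).symm)⟩
    · exact ⟨⟨H.connectedComponentMk x, fun h ↦ hx (ConnectedComponent.exact h)⟩, rfl⟩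
  rw [← Nat.card_congr (.ofBijective merge ⟨merge_injective, merge_surjective⟩),
    ← Finite.card_option, Nat.card_congr (Equiv.optionSubtypeNe _)]

theorem sup_edge_deleteEdges_of_adj {u v : V} (huv : H.Adj u v) :
    H.deleteEdges {s(u, v)} ⊔ edge u v = H := by
  rw [deleteEdges, edge]
  simp [huv]

theorem card_connectedComponent_bot :
    Nat.card (⊥ : SimpleGraph V).ConnectedComponent = Nat.card V :=
  (Nat.card_congr (.ofBijective (⊥ : SimpleGraph V).connectedComponentMk
    ⟨fun _ _ h ↦ reachable_bot.1 (ConnectedComponent.exact h), Quot.mk_surjective⟩)).symm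

theorem card_connectedComponent_add_ncard_edgeSet [Finite V] (hH : H.IsAcyclic) :
    Nat.card H.ConnectedComponent + H.edgeSet.ncard = Nat.card V := by
  induction hm : H.edgeSet.ncard generalizing H with
  | zero =>
    rw [Set.ncard_eq_zero, edgeSet_eq_empty] at hm
    rw [hm, add_zero, card_connectedComponent_bot]
  | succ m ih =>
    obtain ⟨⟨u, v⟩, he⟩ := Set.nonempty_of_ncard_ne_zero (hm.trans_ne m.succ_ne_zero)
    have hbridge : ¬ (H.deleteEdges {s(u, v)}).Reachable u v :=
      isAcyclic_iff_forall_isBridge.1 hH he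
    have hcard : (H.deleteEdges {s(u, v)}).edgeSet.ncard = m := by
      rw [edgeSet_deleteEdges, Set.ncard_sdiff_singleton_of_mem he, hm, Nat.add_sub_cancel]
    have hmerge := card_connectedComponent_sup_edge hbridge
    rw [sup_edge_deleteEdges_of_adj he] at hmerge
    have := ih (hH.anti (deleteEdges_le _)) hcard
    omega

theorem card_lt_card_connectedComponent_add_ncard_edgeSet [Finite V] (hH : ¬ H.IsAcyclic) :
    Nat.card V < Nat.card H.ConnectedComponent + H.edgeSet.ncard := by
  obtain ⟨F, hFH, hF, hreach⟩ := H.exists_isAcyclic_reachable_eq_le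
  have hcomp : Nat.card F.ConnectedComponent = Nat.card H.ConnectedComponent := by
    rw [ConnectedComponent, ConnectedComponent, hreach]
  have hlt : F < H := hFH.lt_of_ne (by rintro rfl; exact hH hF)
  rw [← card_connectedComponent_add_ncard_edgeSet hF, hcomp, Nat.add_lt_add_iff_left]
  exact Set.ncard_lt_ncard (edgeSet_ssubset_edgeSet.2 hlt)

end Forests

section Girth

variable {G : SimpleGraph V} {A : Finset (Sym2 V)}

theorem edgeSet_spanningGraph (hA : ↑A ⊆ G.edgeSet) : (spanningGraph A).edgeSet = A := by
  rw [edgeSet_fromEdgeSet, sdiff_eq_left]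
  exact Set.disjoint_left.2 fun _ he ↦ G.not_isDiag_of_mem_edgeSet (hA he)

theorem spanningGraph_le (hA : ↑A ⊆ G.edgeSet) : spanningGraph A ≤ G := by
  rwa [← edgeSet_subset_edgeSet, edgeSet_spanningGraph hA]

theorem card_edges_toFinset_of_isTrail [DecidableEq V] {u v : V} {w : G.Walk u v}
    (hw : w.IsTrail) :
    #w.edges.toFinset = w.length := by
  rw [List.toFinset_card_of_nodup hw.edges_nodup, Walk.length_edges]

theorem exists_isCycle_edges_toFinset_subset [DecidableEq V] (hA : ↑A ⊆ G.edgeSet)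
    (hcyc : ¬ (spanningGraph A).IsAcyclic) :
    ∃ (v : V) (w : G.Walk v v), w.IsCycle ∧ w.edges.toFinset ⊆ A := by
  simp only [IsAcyclic, not_forall, not_not] at hcyc
  obtain ⟨v, w, hw⟩ := hcyc
  refine ⟨v, w.mapLe (spanningGraph_le hA), hw.mapLe _, fun e he ↦ ?_⟩
  rw [List.mem_toFinset, Walk.edges_mapLe_eq_edges] at he
  simpa [edgeSet_spanningGraph hA] using w.edges_subset_edgeSet he

theorem girth_le_card_of_not_isAcyclic (hA : ↑A ⊆ G.edgeSet)
    (hcyc : ¬ (spanningGraph A).IsAcyclic) : G.girth ≤ #A := by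
  classical
  obtain ⟨v, w, hw, hwA⟩ := exists_isCycle_edges_toFinset_subset hA hcyc
  calc G.girth ≤ w.length := girth_le_length hw
    _ = #w.edges.toFinset := (card_edges_toFinset_of_isTrail hw.isTrail).symm
    _ ≤ #A := card_le_card hwA

theorem exists_isCycle_edges_toFinset_eq [DecidableEq V] (hA : ↑A ⊆ G.edgeSet)
    (hcyc : ¬ (spanningGraph A).IsAcyclic) (hcard : #A = G.girth) :
    ∃ (v : V) (w : G.Walk v v), w.IsCycle ∧ w.edges.toFinset = A := by
  obtain ⟨v, w, hw, hwA⟩ := exists_isCycle_edges_toFinset_subset hA hcyc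
  refine ⟨v, w, hw, eq_of_subset_of_card_le hwA ?_⟩
  rw [card_edges_toFinset_of_isTrail hw.isTrail, hcard]
  exact girth_le_length hw

theorem even_card_filter_mem_of_card_eq_girth [DecidableEq V] (hA : ↑A ⊆ G.edgeSet)
    (hcyc : ¬ (spanningGraph A).IsAcyclic) (hcard : #A = G.girth) (u : V) :
    Even #{e ∈ A | u ∈ e} := by
  obtain ⟨v, w, hw, rfl⟩ := exists_isCycle_edges_toFinset_eq hA hcyc hcard
  have heven := (hw.isTrail.even_countP_edges_iff u).2 fun hvv ↦ absurd rfl hvv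
  rwa [List.countP_eq_length_filter, ← List.toFinset_card_of_nodup (hw.edges_nodup.filter _),
    List.toFinset_filter, filter_congr fun _ _ ↦ decide_eq_true_iff] at heven

theorem mem_iff_odd_of_even_erase [DecidableEq V] {e : Sym2 V} {u : V} (he : e ∈ A)
    (heven : Even #{x ∈ A.erase e | u ∈ x}) : u ∈ e ↔ Odd #{x ∈ A | u ∈ x} := by
  rw [filter_erase] at heven
  by_cases hu : u ∈ e
  · have hmem : e ∈ ({x ∈ A | u ∈ x} : Finset _) := mem_filter.2 ⟨he, hu⟩
    rw [← card_erase_add_one hmem]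
    exact iff_of_true hu heven.add_one
  · rw [erase_eq_of_notMem (by simp [hu])] at heven
    exact iff_of_false hu (Nat.not_odd_iff_even.2 heven)

theorem exists_isAcyclic_subset_card_eq_girth (hA : ↑A ⊆ G.edgeSet) (hcard : G.girth < #A) :
    ∃ B ⊆ A, #B = G.girth ∧ (spanningGraph B).IsAcyclic := by
  classical
  by_contra! hcyc
  have hG : ¬ G.IsAcyclic := fun h ↦ hcyc ∅ (empty_subset A) (girth_eq_zero.2 h).symm
    (by simp [spanningGraph, isAcyclic_bot])
  have hgirth := three_le_girth hG
  obtain ⟨B, hBA, hB⟩ := exists_subset_card_eq (Nat.succ_le_of_lt hcard)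
  obtain ⟨e, he, f, hf, hef⟩ := one_lt_card.1 (show 1 < #B by omega)
  have mem_iff {x : Sym2 V} (hx : x ∈ B) (u : V) : u ∈ x ↔ Odd #{y ∈ B | u ∈ y} := by
    have hsub : B.erase x ⊆ A := (erase_subset x B).trans hBA
    have hcardErase : #(B.erase x) = G.girth := by
      rw [card_erase_of_mem hx, hB, Nat.succ_sub_one]
    exact mem_iff_odd_of_even_erase hx <|
      even_card_filter_mem_of_card_eq_girth ((coe_subset.2 hsub).trans hA)
        (hcyc _ hsub hcardErase) hcardErase u
  exact hef (Sym2.ext fun u ↦ (mem_iff he u).trans (mem_iff hf u).symm)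

end Girth

section ComponentCount

variable {G : SimpleGraph V} {A : Finset (Sym2 V)}

theorem card_connectedComponent_spanningGraph_anti [Finite V] {B : Finset (Sym2 V)}
    (hBA : B ⊆ A) :
    Nat.card (spanningGraph A).ConnectedComponent ≤
      Nat.card (spanningGraph B).ConnectedComponent :=
  ConnectedComponent.card_le_card_of_le (fromEdgeSet_mono (coe_subset.2 hBA))

theorem ncard_edgeSet_spanningGraph (hA : ↑A ⊆ G.edgeSet) :
    (spanningGraph A).edgeSet.ncard = #A := by
  rw [edgeSet_spanningGraph hA, Set.ncard_coe_finset]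

theorem card_connectedComponent_add_card_of_isAcyclic [Finite V] (hA : ↑A ⊆ G.edgeSet)
    (hforest : (spanningGraph A).IsAcyclic) :
    Nat.card (spanningGraph A).ConnectedComponent + #A = Nat.card V := by
  rw [← card_connectedComponent_add_ncard_edgeSet hforest, ncard_edgeSet_spanningGraph hA]

theorem card_connectedComponent_add_card_of_lt_girth [Finite V] (hA : ↑A ⊆ G.edgeSet)
    (hlt : #A < G.girth) :
    Nat.card (spanningGraph A).ConnectedComponent + #A = Nat.card V :=
  card_connectedComponent_add_card_of_isAcyclic hA <| by
    by_contra hcyc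
    exact hlt.not_ge (girth_le_card_of_not_isAcyclic hA hcyc)

theorem card_connectedComponent_add_le_of_le_card [Finite V] (hA : ↑A ⊆ G.edgeSet) {i : ℕ}
    (hi : i < G.girth) (hle : i ≤ #A) :
    Nat.card (spanningGraph A).ConnectedComponent + i ≤ Nat.card V := by
  obtain ⟨B, hBA, rfl⟩ := exists_subset_card_eq hle
  rw [← card_connectedComponent_add_card_of_lt_girth ((coe_subset.2 hBA).trans hA) hi]
  exact Nat.add_le_add_right (card_connectedComponent_spanningGraph_anti hBA) _

theorem card_connectedComponent_add_girth_le [Finite V] (hA : ↑A ⊆ G.edgeSet)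
    (hlt : G.girth < #A) :
    Nat.card (spanningGraph A).ConnectedComponent + G.girth ≤ Nat.card V := by
  obtain ⟨B, hBA, hB, hforest⟩ := exists_isAcyclic_subset_card_eq_girth hA hlt
  rw [← card_connectedComponent_add_card_of_isAcyclic ((coe_subset.2 hBA).trans hA) hforest, hB]
  exact Nat.add_le_add_right (card_connectedComponent_spanningGraph_anti hBA) _

theorem card_connectedComponent_add_eq_iff_of_add_one_lt_girth [Finite V]
    (hA : ↑A ⊆ G.edgeSet) {i : ℕ} (hi : i + 1 < G.girth) :
    Nat.card (spanningGraph A).ConnectedComponent + i = Nat.card V ↔ #A = i := by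
  rcases le_or_gt #A i with hle | hlt
  · have := card_connectedComponent_add_card_of_lt_girth hA (by omega)
    omega
  · have := card_connectedComponent_add_le_of_le_card hA hi hlt
    omega

theorem card_connectedComponent_add_eq_iff_of_add_one_eq_girth [Finite V]
    (hA : ↑A ⊆ G.edgeSet) {i : ℕ} (hi : i + 1 = G.girth) :
    Nat.card (spanningGraph A).ConnectedComponent + i = Nat.card V ↔
      #A = i ∨ #A = G.girth ∧ ¬ (spanningGraph A).IsAcyclic := by
  rcases lt_trichotomy #A G.girth with hlt | heq | hgt
  · have := card_connectedComponent_add_card_of_lt_girth hA hlt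
    omega
  · by_cases hforest : (spanningGraph A).IsAcyclic
    · have := card_connectedComponent_add_card_of_isAcyclic hA hforest
      simp only [hforest, not_true_eq_false, and_false, or_false]
      omega
    · have hlower := card_lt_card_connectedComponent_add_ncard_edgeSet hforest
      rw [ncard_edgeSet_spanningGraph hA] at hlower
      have hupper := card_connectedComponent_add_le_of_le_card hA (i := i) (by omega) (by omega)
      simp only [hforest, not_false_eq_true, and_true]
      omega
  · have := card_connectedComponent_add_girth_le hA hgt
    omega

theorem girth_le_card [Fintype V] : G.girth ≤ Fintype.card V := by
  by_cases hG : G.IsAcyclic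
  · simp [girth_eq_zero.2 hG]
  · obtain ⟨v, w, hw, hlength⟩ := exists_girth_eq_length.2 hG
    simpa [hlength] using hw.support_nodup.length_le_card

end ComponentCount

section CycleSubgraph

variable {W : Type*} {H : SimpleGraph W}

theorem card_edgeSet_eq_card_of_card_neighborSet_eq_two [Finite W]
    (hdeg : ∀ v, Nat.card (H.neighborSet v) = 2) :
    Nat.card H.edgeSet = Nat.card W := by
  classical
  have := Fintype.ofFinite W
  have hdegree (v : W) : H.degree v = 2 := by
    rw [← card_neighborSet_eq_degree, ← Nat.card_eq_fintype_card, hdeg]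
  have hsum := H.sum_degrees_eq_twice_card_edges
  simp only [hdegree, sum_const, card_univ, smul_eq_mul] at hsum
  rw [Nat.card_eq_fintype_card, Nat.card_eq_fintype_card, ← edgeFinset_card]
  omega

variable {G : SimpleGraph V}

/-- `H` is a cycle, encoded as in `SimpleGraph.cycleCount`: a connected 2-regular subgraph. -/
def IsCycleSubgraph (H : G.Subgraph) : Prop :=
  H.coe.Connected ∧ ∀ v, Nat.card (H.coe.neighborSet v) = 2

namespace IsCycleSubgraph

variable {H K : G.Subgraph}

theorem mem_verts_iff (hH : IsCycleSubgraph H) {a : V} : a ∈ H.verts ↔ ∃ b, H.Adj a b := by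
  refine ⟨fun ha ↦ ?_, fun ⟨_, hab⟩ ↦ H.edge_vert hab⟩
  have hnonempty : Nonempty (H.coe.neighborSet ⟨a, ha⟩) :=
    (Nat.card_pos_iff.1 ((hH.2 ⟨a, ha⟩).symm ▸ two_pos)).1
  obtain ⟨b, hb⟩ := hnonempty
  exact ⟨b, hb⟩

theorem eq_of_edgeSet_eq (hH : IsCycleSubgraph H) (hK : IsCycleSubgraph K)
    (hHK : H.edgeSet = K.edgeSet) : H = K := by
  have hadj (a b : V) : H.Adj a b ↔ K.Adj a b := by
    rw [← Subgraph.mem_edgeSet, hHK, Subgraph.mem_edgeSet]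
  refine Subgraph.ext (Set.ext fun a ↦ ?_) (funext₂ fun a b ↦ propext (hadj a b))
  simp only [hH.mem_verts_iff, hK.mem_verts_iff, hadj]

theorem card_edgeSet_coe [Finite V] (hH : IsCycleSubgraph H) :
    Nat.card H.coe.edgeSet = Nat.card H.verts :=
  card_edgeSet_eq_card_of_card_neighborSet_eq_two hH.2

theorem ncard_edgeSet [Finite V] (hH : IsCycleSubgraph H) :
    H.edgeSet.ncard = Nat.card H.verts := by
  rw [← hH.card_edgeSet_coe, Nat.card_coe_set_eq, ← H.image_coe_edgeSet_coe,
    Set.ncard_image_of_injective _ (Sym2.map.injective Subtype.val_injective)]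

theorem not_isAcyclic_coe [Finite V] (hH : IsCycleSubgraph H) : ¬ H.coe.IsAcyclic := by
  intro hforest
  have hcard := (isTree_iff_connected_and_card.1 ⟨hH.1, hforest⟩).2
  rw [hH.card_edgeSet_coe] at hcard
  omega

theorem not_isAcyclic_spanningCoe [Finite V] (hH : IsCycleSubgraph H) :
    ¬ H.spanningCoe.IsAcyclic := fun hforest ↦
  hH.not_isAcyclic_coe (hforest.comap H.coeEmbeddingSpanningCoe.toHom
    H.coeEmbeddingSpanningCoe.injective)

end IsCycleSubgraph

theorem isCycleSubgraph_toSubgraph {v : V} {w : G.Walk v v} (hw : w.IsCycle) :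
    IsCycleSubgraph w.toSubgraph := by
  refine ⟨w.toSubgraph_connected.coe, fun x ↦ ?_⟩
  rw [Nat.card_congr (Subgraph.coeNeighborSetEquiv x), Nat.card_coe_set_eq]
  exact hw.ncard_neighborSet_toSubgraph_eq_two (w.mem_verts_toSubgraph.1 x.2)

open scoped Classical in
theorem bijOn_edgeSet_toFinset [Fintype V] :
    Set.BijOn (fun H : G.Subgraph ↦ H.edgeSet.toFinset)
      {H | Nat.card H.verts = G.girth ∧ IsCycleSubgraph H}
      {A | ↑A ⊆ G.edgeSet ∧ #A = G.girth ∧ ¬ (spanningGraph A).IsAcyclic} := by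
  refine ⟨?mapsTo, ?injOn, ?surjOn⟩
  case mapsTo =>
    rintro H ⟨hverts, hH⟩
    have hcard : #H.edgeSet.toFinset = G.girth := by
      rw [← Set.ncard_eq_toFinset_card', hH.ncard_edgeSet, hverts]
    have hspanning : spanningGraph H.edgeSet.toFinset = H.spanningCoe := by
      rw [spanningGraph, Set.coe_toFinset, ← H.edgeSet_spanningCoe, fromEdgeSet_edgeSet]
    simpa [hcard, hspanning, H.edgeSet_subset] using hH.not_isAcyclic_spanningCoe
  case injOn =>
    rintro H ⟨-, hH⟩ K ⟨-, hK⟩ hHK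
    exact hH.eq_of_edgeSet_eq hK (Set.toFinset_inj.1 hHK)
  case surjOn =>
    rintro A ⟨hA, hcard, hcyc⟩
    obtain ⟨v, w, hw, rfl⟩ := exists_isCycle_edges_toFinset_eq hA hcyc hcard
    have hcycle := isCycleSubgraph_toSubgraph hw
    have hedges : w.toSubgraph.edgeSet.toFinset = w.edges.toFinset := by ext; simp
    refine ⟨w.toSubgraph, ⟨?_, hcycle⟩, hedges⟩
    rw [← hcycle.ncard_edgeSet, Set.ncard_eq_toFinset_card', hedges, hcard]

open scoped Classical in
theorem cycleCount_girth [Finite V] [Fintype G.edgeSet] :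
    G.cycleCount G.girth =
      #{A ∈ G.edgeFinset.powerset | #A = G.girth ∧ ¬ (spanningGraph A).IsAcyclic} := by
  have := Fintype.ofFinite V
  calc G.cycleCount G.girth
      = {H : G.Subgraph | Nat.card H.verts = G.girth ∧ IsCycleSubgraph H}.ncard := rfl
    _ = {A : Finset (Sym2 V) |
          ↑A ⊆ G.edgeSet ∧ #A = G.girth ∧ ¬ (spanningGraph A).IsAcyclic}.ncard :=
        bijOn_edgeSet_toFinset.ncard_eq
    _ = #{A ∈ G.edgeFinset.powerset | #A = G.girth ∧ ¬ (spanningGraph A).IsAcyclic} := by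
        rw [← Set.ncard_coe_finset, coe_filter]
        simp only [mem_powerset, ← coe_subset, coe_edgeFinset]

end CycleSubgraph

section Coefficients

variable [Fintype V] [DecidableEq V] {G : SimpleGraph V} [DecidableRel G.Adj] {P : ℤ[X]} {i : ℕ}

theorem coeff_card_sub_eq_sum (hP : ∀ k : ℕ, P.eval (k : ℤ) = G.numColorings k)
    (hi : i ≤ Fintype.card V) :
    P.coeff (Fintype.card V - i) = ∑ A ∈ G.edgeFinset.powerset
      with Nat.card (spanningGraph A).ConnectedComponent + i = Nat.card V, (-1) ^ #A := by
  simp only [coeff_eq_sum hP, eq_tsub_iff_add_eq_of_le hi, Nat.card_eq_fintype_card (α := V)]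

theorem sum_neg_one_pow_card {α R : Type*} [Ring R] {S : Finset (Finset α)}
    (hS : ∀ A ∈ S, #A = i) : ∑ A ∈ S, (-1 : R) ^ #A = (-1) ^ i * #S := by
  rw [sum_congr rfl fun A hA ↦ by rw [hS A hA], sum_const, nsmul_eq_mul, Nat.cast_comm]

theorem coeff_card_sub_of_add_one_lt_girth (hP : ∀ k : ℕ, P.eval (k : ℤ) = G.numColorings k)
    (hi : i + 1 < G.girth) :
    P.coeff (Fintype.card V - i) = (-1) ^ i * ((#G.edgeFinset).choose i : ℤ) := by
  have hfilter : {A ∈ G.edgeFinset.powerset |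
      Nat.card (spanningGraph A).ConnectedComponent + i = Nat.card V} =
      G.edgeFinset.powersetCard i := by
    rw [powersetCard_eq_filter]
    exact filter_congr fun A hA ↦
      card_connectedComponent_add_eq_iff_of_add_one_lt_girth
        (Set.subset_toFinset.1 (mem_powerset.1 hA)) hi
  have hgirth := girth_le_card (G := G)
  rw [coeff_card_sub_eq_sum hP (by omega), hfilter,
    sum_neg_one_pow_card fun A hA ↦ (mem_powersetCard.1 hA).2, card_powersetCard]

theorem coeff_card_sub_of_add_one_eq_girth (hP : ∀ k : ℕ, P.eval (k : ℤ) = G.numColorings k)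
    (hi : i + 1 = G.girth) :
    P.coeff (Fintype.card V - i) =
      (-1) ^ i * ((#G.edgeFinset).choose i - G.cycleCount G.girth : ℤ) := by
  classical
  have hfilter : {A ∈ G.edgeFinset.powerset |
      Nat.card (spanningGraph A).ConnectedComponent + i = Nat.card V} =
      G.edgeFinset.powersetCard i ∪
        {A ∈ G.edgeFinset.powerset | #A = G.girth ∧ ¬ (spanningGraph A).IsAcyclic} := by
    rw [powersetCard_eq_filter, ← filter_or]
    exact filter_congr fun A hA ↦
      card_connectedComponent_add_eq_iff_of_add_one_eq_girth
        (Set.subset_toFinset.1 (mem_powerset.1 hA)) hi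
  have hdisjoint : Disjoint (G.edgeFinset.powersetCard i)
      {A ∈ G.edgeFinset.powerset | #A = G.girth ∧ ¬ (spanningGraph A).IsAcyclic} := by
    rw [powersetCard_eq_filter, disjoint_filter]
    omega
  have hgirth := girth_le_card (G := G)
  rw [coeff_card_sub_eq_sum hP (by omega), hfilter, sum_union hdisjoint,
    sum_neg_one_pow_card fun A hA ↦ (mem_powersetCard.1 hA).2,
    sum_neg_one_pow_card fun A hA ↦ (mem_filter.1 hA).2.1, card_powersetCard, cycleCount_girth,
    ← hi, pow_succ]
  ring

end Coefficients

end ChromaticPolynomial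

/-- If `G` is a graph with `m` edges, girth `g > 2`, and `n_g` cycles of length `g`, then
the first `g` coefficients of the chromatic polynomial are
`c_{n−i} = (−1)^i C(m, i)` for `0 ≤ i < g − 1` and
`c_{n−(g−1)} = (−1)^{g−1} (C(m, g−1) − n_g)`. -/
theorem chromaticPolynomial_first_girth_coeffs {V : Type*} [Fintype V] [DecidableEq V]
    (G : SimpleGraph V) [DecidableRel G.Adj] (P : Polynomial ℤ)
    (hP : ∀ k : ℕ, P.eval (k : ℤ) = G.numColorings k)
    (hcyc : ¬ G.IsAcyclic) {g : ℕ} (hg : G.girth = g) (hg2 : 2 < g) :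
    (∀ i < g - 1,
        P.coeff (Fintype.card V - i) = (-1) ^ i * (G.edgeFinset.card.choose i : ℤ)) ∧
      P.coeff (Fintype.card V - (g - 1)) =
        (-1) ^ (g - 1) *
          ((G.edgeFinset.card.choose (g - 1) : ℤ) - (G.cycleCount g : ℤ)) := by
  subst hg
  refine ⟨fun i hi ↦ ?_, ?_⟩
  · exact ChromaticPolynomial.coeff_card_sub_of_add_one_lt_girth hP (by omega)
  · exact ChromaticPolynomial.coeff_card_sub_of_add_one_eq_girth hP (by omega)
end

section
/- Let G be a finite connected simple graph with n ≥ 4 vertices and m edges, and write P_G(λ) = Σ_{i=0}^{n} c_{n−i} λ^{n−i}. Let t₁ be the number of triangles in G (3-element vertex subsets that are pairwise adjacent), t₂ the number of induced 4-cycles in G (4-element vertex subsets whose induced subgraph is a 4-cycle), and t₃ the number of complete subgraphs on 4 vertices (4-element vertex subsets that are pairwise adjacent). Then c_n = 1, c_{n−1} = −m, c_{n−2} = C(m, 2) − t₁, and c_{n−3} = −C(m, 3) + (m − 2)t₁ + t₂ − 2t₃, where C(m, i) denotes the binomial coefficient m choose i. -/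
open Polynomial

/-- The number of induced `4`-cycles of `G`: `4`-element vertex subsets whose induced
subgraph is a cycle graph (connected with every vertex having exactly two neighbors). -/
noncomputable def SimpleGraph.inducedFourCycleCount {V : Type*} [Fintype V]
    (G : SimpleGraph V) : ℕ :=
  Nat.card {s : Finset V // s.card = 4 ∧ (G.induce (s : Set V)).Connected ∧
    ∀ v, Nat.card ((G.induce (s : Set V)).neighborSet v) = 2}

/-!
For an edge `uv`, a proper coloring of `G - uv` either separates `u` and `v`, and is a coloring of
`G`, or identifies them. If the contraction of `uv` is carried out without removing `v`, which
becomes an isolated vertex, then the colorings of the second kind are counted by its chromatic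
polynomial divided by `k`, so `k P_G(k) = k P_{G - uv}(k) - P_{G / uv}(k)` for graphs on the same
vertex set. Comparing coefficients, it remains to see that the claimed expressions satisfy the
same recursion. Passing from `G` to `G - uv` or `G / uv` changes the numbers of edges, triangles,
`K₄`s and induced `4`-cycles only through the cliques of common neighbors of `u` and `v`, and
through the induced `4`-cycles on `uv`, whose opposite edges become triangles in `G / uv`.
-/

namespace ChromaticPolynomial

open Finset Function

section Polynomial

variable {V : Type*}

/-- The partitions of the vertex set of `G` into independent sets, encoded as equivalence
relations that never identify two adjacent vertices. -/
def StablePartition (G : SimpleGraph V) : Type _ :=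
  {r : Setoid V // ∀ ⦃a b⦄, G.Adj a b → ¬ r a b}

instance [Finite V] (G : SimpleGraph V) : Finite (StablePartition G) :=
  Finite.of_injective (fun r : StablePartition G ↦ ⇑r.1) fun _ _ h ↦
    Subtype.ext (Setoid.ext fun a b ↦ iff_of_eq (congrFun₂ h a b))

lemma card_coloring_eq_sum_embedding [Finite V] (G : SimpleGraph V) (α : Type*) [Finite α]
    [Fintype (StablePartition G)] :
    Nat.card (G.Coloring α) = ∑ r : StablePartition G, Nat.card (Quotient r.1 ↪ α) := by
  let color : (Σ r : StablePartition G, (Quotient r.1 ↪ α)) → G.Coloring α := fun p ↦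
    .mk (fun v ↦ p.2 ⟦v⟧) fun hab h ↦ p.1.2 hab (Quotient.exact (p.2.injective h))
  have color_injective : Injective color := by
    rintro ⟨⟨r, hr⟩, g⟩ ⟨⟨r', hr'⟩, g'⟩ h
    have heq (a : V) : g ⟦a⟧ = g' ⟦a⟧ := DFunLike.congr_fun h a
    obtain rfl : r = r' := Setoid.ext fun a b ↦ by
      rw [← Quotient.eq, ← Quotient.eq, ← g.apply_eq_iff_eq, heq, heq, g'.apply_eq_iff_eq]
    obtain rfl : g = g' := DFunLike.ext _ _ (Quotient.ind heq)
    rfl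
  have color_surjective : Surjective color := fun C ↦
    ⟨⟨⟨Setoid.ker C, fun _ _ hab ↦ C.valid hab⟩, Setoid.kerLift C, Setoid.kerLift_injective C⟩,
      rfl⟩
  rw [← Nat.card_congr (Equiv.ofBijective color ⟨color_injective, color_surjective⟩),
    Nat.card_sigma]

open Classical in
/-- The chromatic polynomial of `G`: a coloring with `k` colors is a partition of the vertices
into independent sets together with an injective assignment of colors to its classes, so
each partition with `j` classes contributes the falling factorial `k (k - 1) ⋯ (k - j + 1)`. -/
noncomputable def chromaticPolynomial [Finite V] (G : SimpleGraph V) : ℤ[X] :=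
  letI := Fintype.ofFinite (StablePartition G)
  ∑ r : StablePartition G, descPochhammer ℤ (Nat.card (Quotient r.1))

theorem eval_chromaticPolynomial [Finite V] (G : SimpleGraph V) (k : ℕ) :
    (chromaticPolynomial G).eval (k : ℤ) = Nat.card (G.Coloring (Fin k)) := by
  classical
  have := Fintype.ofFinite V
  have card_embedding (r : Setoid V) :
      Nat.card (Quotient r ↪ Fin k) = k.descFactorial (Nat.card (Quotient r)) := by
    rw [Nat.card_eq_fintype_card, Nat.card_eq_fintype_card, Fintype.card_embedding_eq,
      Fintype.card_fin]
  let := Fintype.ofFinite (StablePartition G)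
  simp only [chromaticPolynomial, eval_finsetSum, descPochhammer_eval_eq_descFactorial,
    card_coloring_eq_sum_embedding, card_embedding, Nat.cast_sum]

lemma eq_of_forall_eval_natCast {P Q : ℤ[X]} (h : ∀ k : ℕ, P.eval (k : ℤ) = Q.eval (k : ℤ)) :
    P = Q :=
  Polynomial.eq_of_infinite_eval_eq P Q <|
    (Set.infinite_range_of_injective (Nat.cast_injective (R := ℤ))).mono <| by
      rintro _ ⟨k, rfl⟩
      exact h k

theorem chromaticPolynomial_bot [Fintype V] :
    chromaticPolynomial (⊥ : SimpleGraph V) = X ^ Fintype.card V := by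
  refine eq_of_forall_eval_natCast fun k ↦ ?_
  let e : (⊥ : SimpleGraph V).Coloring (Fin k) ≃ (V → Fin k) :=
    { toFun := fun C ↦ C
      invFun := fun f ↦ .mk f fun h ↦ h.elim
      left_inv := fun _ ↦ rfl
      right_inv := fun _ ↦ rfl }
  rw [eval_chromaticPolynomial, Nat.card_congr e, Nat.card_fun]
  simp

end Polynomial

section DeletionContraction

variable {V α : Type*} {G : SimpleGraph V} {u v : V}

lemma deleteEdges_pair_adj {a b : V} : (G.deleteEdges {s(u, v)}).Adj a b ↔
    G.Adj a b ∧ ¬(a = u ∧ b = v) ∧ ¬(a = v ∧ b = u) := by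
  simp only [SimpleGraph.deleteEdges_adj, Set.mem_singleton_iff, Sym2.eq_iff, not_or]

/-- The contraction of the edge `uv` onto `u`, on the same vertex set: `v` is left behind as an
isolated vertex, so a coloring is a coloring of the usual contraction together with an arbitrary
color for `v`. -/
def contractEdge [DecidableEq V] (G : SimpleGraph V) (u v : V) : SimpleGraph V :=
  G.map (update id v u)

lemma contractEdge_adj [DecidableEq V] (huv : u ≠ v) {a b : V} :
    (contractEdge G u v).Adj a b ↔ a ≠ b ∧ a ≠ v ∧ b ≠ v ∧
      (G.Adj a b ∨ a = u ∧ G.Adj v b ∨ b = u ∧ G.Adj v a) := by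
  have adj_comm := G.adj_comm
  simp only [contractEdge, SimpleGraph.map_adj', update_apply, id]
  grind

lemma card_coloring_deleteEdges [Finite V] [Finite α] (h : G.Adj u v) :
    Nat.card ((G.deleteEdges {s(u, v)}).Coloring α) = Nat.card (G.Coloring α) +
      Nat.card {C : (G.deleteEdges {s(u, v)}).Coloring α // C u = C v} := by
  let e : {C : (G.deleteEdges {s(u, v)}).Coloring α // ¬ C u = C v} ≃ G.Coloring α :=
    { toFun := fun C ↦ .mk C.1 fun {a b} hab ↦ by
        by_cases he : s(a, b) = s(u, v)
        · rcases Sym2.eq_iff.1 he with ⟨rfl, rfl⟩ | ⟨rfl, rfl⟩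
          exacts [C.2, fun h ↦ C.2 h.symm]
        · exact C.1.valid (SimpleGraph.deleteEdges_adj.2 ⟨hab, he⟩)
      invFun := fun C ↦ ⟨C.comp (.ofLE (G.deleteEdges_le _)), C.valid h⟩
      left_inv := fun _ ↦ rfl
      right_inv := fun _ ↦ rfl }
  classical
  rw [← Nat.card_congr (Equiv.sumCompl fun C : (G.deleteEdges {s(u, v)}).Coloring α ↦ C u = C v),
    Nat.card_sum, Nat.card_congr e, add_comm]

lemma update_valid_deleteEdges [DecidableEq V] (huv : u ≠ v)
    (C : (contractEdge G u v).Coloring α) {a b : V} (hab : (G.deleteEdges {s(u, v)}).Adj a b) :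
    update C v (C u) a ≠ update C v (C u) b := by
  obtain ⟨hab, h₁, h₂⟩ := deleteEdges_pair_adj.1 hab
  have valid {x y : V} := C.valid (v := x) (w := y)
  simp only [contractEdge_adj huv] at valid
  have := hab.ne
  have := hab.symm
  simp only [update_apply]
  grind

lemma update_valid_contractEdge [DecidableEq V] (huv : u ≠ v)
    (C : (G.deleteEdges {s(u, v)}).Coloring α) (hC : C u = C v) (c : α) {a b : V}
    (hab : (contractEdge G u v).Adj a b) : update C v c a ≠ update C v c b := by
  obtain ⟨hne, ha, hb, hab⟩ := (contractEdge_adj huv).1 hab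
  have valid {x y : V} := C.valid (v := x) (w := y)
  simp only [deleteEdges_pair_adj] at valid
  rw [update_of_ne ha, update_of_ne hb]
  grind

lemma card_coloring_contractEdge [DecidableEq V] (huv : u ≠ v) :
    Nat.card ((contractEdge G u v).Coloring α) = Nat.card α *
      Nat.card {C : (G.deleteEdges {s(u, v)}).Coloring α // C u = C v} := by
  let e : (contractEdge G u v).Coloring α ≃
      α × {C : (G.deleteEdges {s(u, v)}).Coloring α // C u = C v} :=
    { toFun := fun C ↦ (C v, ⟨SimpleGraph.Coloring.mk (update C v (C u))
          (update_valid_deleteEdges huv C), by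
            change update C v (C u) u = update C v (C u) v
            rw [update_of_ne huv, update_self]⟩)
      invFun := fun p ↦ SimpleGraph.Coloring.mk (update p.2.1 v p.1)
        (update_valid_contractEdge huv p.2.1 p.2.2 p.1)
      left_inv := fun C ↦ DFunLike.coe_injective <| by
        change update (update C v (C u)) v (C v) = C
        rw [update_idem, update_eq_self]
      right_inv := fun ⟨c, C, hC⟩ ↦ Prod.ext (update_self ..) <| Subtype.ext <|
        DFunLike.coe_injective <| by
          change update (update C v c) v (update C v c u) = C
          rw [update_idem, update_of_ne huv, hC, update_eq_self] }
  rw [Nat.card_congr e, Nat.card_prod]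

theorem X_mul_chromaticPolynomial [Finite V] [DecidableEq V] (h : G.Adj u v) :
    X * chromaticPolynomial G =
      X * chromaticPolynomial (G.deleteEdges {s(u, v)}) -
        chromaticPolynomial (contractEdge G u v) := by
  refine eq_of_forall_eval_natCast fun k ↦ ?_
  simp only [eval_sub, eval_mul, eval_X, eval_chromaticPolynomial,
    card_coloring_deleteEdges h, card_coloring_contractEdge h.ne, Nat.card_fin]
  push_cast
  ring

theorem coeff_chromaticPolynomial [Finite V] [DecidableEq V] (h : G.Adj u v) (j : ℕ) :
    (chromaticPolynomial G).coeff j = (chromaticPolynomial (G.deleteEdges {s(u, v)})).coeff j -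
      (chromaticPolynomial (contractEdge G u v)).coeff (j + 1) := by
  simpa only [coeff_sub, coeff_X_mul] using
    congr_arg (coeff · (j + 1)) (X_mul_chromaticPolynomial h)

end DeletionContraction

section SubsetCount

variable {V : Type*}

open Classical in
/-- The number of subsets of `A` with `k` elements that satisfy `p`. -/
noncomputable def subsetCount (A : Finset V) (k : ℕ) (p : Finset V → Prop) : ℕ :=
  #{s ∈ A.powersetCard k | p s}

variable {A : Finset V} {k : ℕ} {p q : Finset V → Prop}

lemma subsetCount_congr (h : ∀ s ⊆ A, #s = k → (p s ↔ q s)) :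
    subsetCount A k p = subsetCount A k q := by
  classical
  exact congr_arg card <| filter_congr fun s hs ↦
    h s (mem_powersetCard.1 hs).1 (mem_powersetCard.1 hs).2

lemma subsetCount_eq_zero (h : ∀ s ⊆ A, #s = k → ¬ p s) : subsetCount A k p = 0 := by
  classical
  exact card_eq_zero.2 <| filter_false_of_mem fun s hs ↦
    h s (mem_powersetCard.1 hs).1 (mem_powersetCard.1 hs).2

lemma subsetCount_zero (h : p ∅) : subsetCount A 0 p = 1 := by
  simp [subsetCount, filter_singleton, h]

lemma subsetCount_and_add_and_not :
    subsetCount A k (fun s ↦ p s ∧ q s) + subsetCount A k (fun s ↦ p s ∧ ¬ q s) =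
      subsetCount A k p := by
  classical
  simp only [subsetCount, ← filter_filter, card_filter_add_card_filter_not]

lemma subsetCount_add_subsetCount_and {r : Finset V → Prop} (hp : ∀ s, p s → r s)
    (hq : ∀ s, q s → r s) :
    subsetCount A k r + subsetCount A k (fun s ↦ p s ∧ q s) =
      subsetCount A k p + subsetCount A k q + subsetCount A k (fun s ↦ r s ∧ ¬ p s ∧ ¬ q s) := by
  classical
  have hr : subsetCount A k (fun s ↦ r s ∧ (p s ∨ q s)) = subsetCount A k (fun s ↦ p s ∨ q s) :=
    subsetCount_congr fun s _ _ ↦ and_iff_right_of_imp fun h ↦ h.elim (hp s) (hq s)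
  have inclusion_exclusion :
      subsetCount A k (fun s ↦ p s ∨ q s) + subsetCount A k (fun s ↦ p s ∧ q s) =
        subsetCount A k p + subsetCount A k q := by
    simp only [subsetCount, filter_or, filter_and, card_union_add_card_inter]
  rw [← subsetCount_and_add_and_not (p := r) (q := fun s ↦ p s ∨ q s), hr, add_right_comm,
    inclusion_exclusion]
  simp only [not_or]

lemma subsetCount_forall_mem (P : V → Prop) :
    subsetCount A k (fun s ↦ ∀ x ∈ s, P x) =
      (subsetCount A 1 fun s ↦ ∀ x ∈ s, P x).choose k := by
  classical
  have forall_mem (j : ℕ) :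
      subsetCount A j (fun s ↦ ∀ x ∈ s, P x) = (#{x ∈ A | P x}).choose j := by
    rw [← card_powersetCard, subsetCount]
    congr 1
    ext s
    simp only [mem_filter, mem_powersetCard, subset_iff]
    grind
  rw [forall_mem, forall_mem, Nat.choose_one_right]

lemma subsetCount_insert [DecidableEq V] {a : V} (ha : a ∉ A) :
    subsetCount (insert a A) (k + 1) p =
      subsetCount A (k + 1) p + subsetCount A k (fun s ↦ p (insert a s)) := by
  classical
  have notMem {j : ℕ} {s : Finset V} (hs : s ∈ A.powersetCard j) : a ∉ s :=
    notMem_mono (mem_powersetCard.1 hs).1 ha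
  have insert_injOn : Set.InjOn (insert a) {s : Finset V | a ∉ s} :=
    insert_erase_invOn.2.injOn
  simp only [subsetCount]
  rw [powersetCard_succ_insert ha, filter_union, filter_image, card_union_of_disjoint,
    card_image_of_injOn (insert_injOn.mono fun s hs ↦ notMem (mem_filter.1 hs).1)]
  refine disjoint_left.2 fun s hs hs' ↦ ?_
  obtain ⟨t, -, rfl⟩ := mem_image.1 hs'
  exact notMem (mem_filter.1 hs).1 (mem_insert_self a t)

variable [Fintype V] [DecidableEq V] {u v : V}

lemma subsetCount_univ (huv : u ≠ v) (k : ℕ) (p : Finset V → Prop) :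
    subsetCount univ (k + 2) p = subsetCount {u, v}ᶜ (k + 2) p +
      subsetCount {u, v}ᶜ (k + 1) (fun t ↦ p (insert u t)) +
      subsetCount {u, v}ᶜ (k + 1) (fun t ↦ p (insert v t)) +
      subsetCount {u, v}ᶜ k (fun t ↦ p (insert u (insert v t))) := by
  have huniv : (univ : Finset V) = insert u (insert v {u, v}ᶜ) := by
    ext x
    simp only [mem_univ, mem_insert, mem_compl, mem_singleton, true_iff]
    tauto
  rw [huniv, subsetCount_insert (by simp [huv]), subsetCount_insert (by simp),
    subsetCount_insert (a := v) (by simp)]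
  ring

lemma subsetCount_compl_pair_congr (h : ∀ t, u ∉ t → v ∉ t → #t = k → (p t ↔ q t)) :
    subsetCount {u, v}ᶜ k p = subsetCount {u, v}ᶜ k q :=
  subsetCount_congr fun t ht ↦
    h t (fun hu ↦ by simpa using ht hu) (fun hv ↦ by simpa using ht hv)

end SubsetCount

section Counting

variable {V : Type*} {G : SimpleGraph V} {u v : V}

/-- The number of cliques of `G` with `k` vertices. -/
noncomputable def cliqueCount [Fintype V] (G : SimpleGraph V) (k : ℕ) : ℕ :=
  subsetCount univ k fun s : Finset V ↦ G.IsClique s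

/-- The number of cliques with `k` vertices all of which are common neighbors of `u` and `v`. -/
noncomputable def commonCliqueCount [Fintype V] [DecidableEq V] (G : SimpleGraph V) (u v : V)
    (k : ℕ) : ℕ :=
  subsetCount {u, v}ᶜ k fun t ↦ G.IsClique t ∧ (∀ x ∈ t, G.Adj u x) ∧ ∀ x ∈ t, G.Adj v x

/-- The number of cliques with `k` vertices, none of them `u` or `v`, that extend to a clique by
adding the vertex obtained by contracting `uv`, but neither by adding `u` nor by adding `v`. For
`k = 2` and adjacent `u` and `v` these are the edges opposite to `uv` in an induced `4`-cycle. -/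
noncomputable def mixedCliqueCount [Fintype V] [DecidableEq V] (G : SimpleGraph V) (u v : V)
    (k : ℕ) : ℕ :=
  subsetCount {u, v}ᶜ k fun t ↦ G.IsClique t ∧ (∀ x ∈ t, G.Adj u x ∨ G.Adj v x) ∧
    (¬ ∀ x ∈ t, G.Adj u x) ∧ ¬ ∀ x ∈ t, G.Adj v x

open Classical in
/-- Every vertex in `s` has exactly two neighbors in `s`. On `4`-element sets this says that `s`
induces a `4`-cycle. -/
def IsTwoRegularOn (G : SimpleGraph V) (s : Finset V) : Prop :=
  ∀ x ∈ s, #{y ∈ s | G.Adj x y} = 2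

/-- The number of induced `4`-cycles of `G`. -/
noncomputable def fourCycleCount [Fintype V] (G : SimpleGraph V) : ℕ :=
  subsetCount univ 4 (IsTwoRegularOn G)

lemma cliqueCount_bot [Fintype V] (k : ℕ) : cliqueCount (⊥ : SimpleGraph V) (k + 2) = 0 := by
  refine subsetCount_eq_zero fun s _ hs h ↦ ?_
  obtain ⟨x, hx, y, hy, hxy⟩ := one_lt_card.1 (show 1 < #s by lia)
  exact h hx hy hxy

lemma fourCycleCount_bot [Fintype V] : fourCycleCount (⊥ : SimpleGraph V) = 0 :=
  subsetCount_eq_zero fun s _ hs h ↦ by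
    obtain ⟨x, hx⟩ := card_pos.1 (show 0 < #s by lia)
    simpa using h x hx

lemma deleteEdges_adj_of_notMem {s : Finset V} (hs : u ∉ s ∨ v ∉ s) {x y : V} (hx : x ∈ s)
    (hy : y ∈ s) : (G.deleteEdges {s(u, v)}).Adj x y ↔ G.Adj x y := by
  rw [deleteEdges_pair_adj]
  grind

lemma isClique_deleteEdges {s : Finset V} (hs : u ∉ s ∨ v ∉ s) :
    (G.deleteEdges {s(u, v)}).IsClique (s : Set V) ↔ G.IsClique (s : Set V) :=
  forall₄_congr fun _ hx _ hy ↦ imp_congr_right fun _ ↦ deleteEdges_adj_of_notMem hs hx hy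

lemma isTwoRegularOn_deleteEdges {s : Finset V} (hs : u ∉ s ∨ v ∉ s) :
    IsTwoRegularOn (G.deleteEdges {s(u, v)}) s ↔ IsTwoRegularOn G s := by
  refine forall₂_congr fun x hx ↦ Eq.congr_left (congr_arg card ?_)
  ext y
  simp only [mem_filter]
  exact and_congr_right (deleteEdges_adj_of_notMem hs hx)

lemma isClique_insert_insert [DecidableEq V] (h : G.Adj u v) {t : Finset V} (hu : u ∉ t)
    (hv : v ∉ t) : G.IsClique (insert u (insert v t) : Finset V) ↔
      G.IsClique (t : Set V) ∧ (∀ x ∈ t, G.Adj u x) ∧ ∀ x ∈ t, G.Adj v x := by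
  rw [coe_insert, coe_insert, SimpleGraph.isClique_insert_of_notMem (by simp [h.ne, hu]),
    SimpleGraph.isClique_insert_of_notMem (mod_cast hv)]
  simp only [SetLike.mem_coe, Set.mem_insert_iff, forall_eq_or_imp, h, true_and]
  tauto

lemma isClique_contractEdge [DecidableEq V] (huv : u ≠ v) {t : Finset V} (hu : u ∉ t) (hv : v ∉ t) :
    (contractEdge G u v).IsClique (t : Set V) ↔ G.IsClique (t : Set V) :=
  forall₄_congr fun a ha b hb ↦ imp_congr_right fun hab ↦ by
    rw [contractEdge_adj huv]
    grind

lemma isClique_insert_contractEdge [DecidableEq V] (huv : u ≠ v) {t : Finset V} (hu : u ∉ t)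
    (hv : v ∉ t) : (contractEdge G u v).IsClique (insert u t : Finset V) ↔
      G.IsClique (t : Set V) ∧ ∀ x ∈ t, G.Adj u x ∨ G.Adj v x := by
  rw [coe_insert, SimpleGraph.isClique_insert_of_notMem (mod_cast hu),
    isClique_contractEdge huv hu hv]
  refine and_congr_right fun _ ↦ forall₂_congr fun x hx ↦ ?_
  rw [contractEdge_adj huv]
  grind

lemma not_isClique_contractEdge [DecidableEq V] (huv : u ≠ v) {s : Finset V} (hv : v ∈ s)
    (hs : 2 ≤ #s) : ¬ (contractEdge G u v).IsClique (s : Set V) := fun h ↦ by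
  obtain ⟨x, hx, hxv⟩ := exists_mem_ne hs v
  exact ((contractEdge_adj huv).1 (h hv hx hxv.symm)).2.1 rfl

lemma isClique_insert_deleteEdges [DecidableEq V] {w : V} {t : Finset V}
    (h : u ∉ insert w t ∨ v ∉ insert w t) (hw : w ∉ t) :
    (G.deleteEdges {s(u, v)}).IsClique (insert w t : Finset V) ↔
      G.IsClique (t : Set V) ∧ ∀ x ∈ t, G.Adj w x := by
  rw [isClique_deleteEdges h, coe_insert, SimpleGraph.isClique_insert_of_notMem (mod_cast hw)]
  rfl

lemma not_isClique_deleteEdges {s : Finset V} (huv : u ≠ v) (hu : u ∈ s) (hv : v ∈ s) :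
    ¬ (G.deleteEdges {s(u, v)}).IsClique (s : Set V) := fun h ↦ by
  simpa using h hu hv huv

lemma isTwoRegularOn_quadruple [DecidableEq V] {a b c d : V} (hab : a ≠ b) (hac : a ≠ c)
    (had : a ≠ d) (hbc : b ≠ c) (hbd : b ≠ d) (hcd : c ≠ d) : IsTwoRegularOn G {a, b, c, d} ↔
      (G.Adj a b ∧ G.Adj b c ∧ G.Adj c d ∧ G.Adj d a ∧ ¬ G.Adj a c ∧ ¬ G.Adj b d) ∨
      (G.Adj a b ∧ G.Adj b d ∧ G.Adj d c ∧ G.Adj c a ∧ ¬ G.Adj a d ∧ ¬ G.Adj b c) ∨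
      (G.Adj a c ∧ G.Adj c b ∧ G.Adj b d ∧ G.Adj d a ∧ ¬ G.Adj a b ∧ ¬ G.Adj c d) := by
  have symm := @G.adj_comm
  simp only [IsTwoRegularOn, mem_insert, mem_singleton, forall_eq_or_imp, forall_eq]
  by_cases h₁ : G.Adj a b <;> by_cases h₂ : G.Adj a c <;> by_cases h₃ : G.Adj a d <;>
  by_cases h₄ : G.Adj b c <;> by_cases h₅ : G.Adj b d <;> by_cases h₆ : G.Adj c d <;>
  simp [filter_insert, filter_singleton, symm b a, symm c a, symm d a, symm c b, symm d b,
    symm d c, *]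

lemma isTwoRegularOn_insert_insert [DecidableEq V] (h : G.Adj u v) {t : Finset V} (hu : u ∉ t)
    (hv : v ∉ t) (ht : #t = 2) : IsTwoRegularOn G (insert u (insert v t)) ↔
      G.IsClique (t : Set V) ∧ (∀ x ∈ t, G.Adj u x ∨ G.Adj v x) ∧
        (¬ ∀ x ∈ t, G.Adj u x) ∧ ¬ ∀ x ∈ t, G.Adj v x := by
  obtain ⟨x, y, hxy, rfl⟩ := card_eq_two.1 ht
  simp only [mem_insert, mem_singleton, not_or] at hu hv
  rw [isTwoRegularOn_quadruple h.ne hu.1 hu.2 hv.1 hv.2 hxy]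
  have := G.adj_comm
  simp only [coe_pair, SimpleGraph.isClique_pair, mem_insert, mem_singleton, forall_eq_or_imp,
    forall_eq]
  grind

lemma isTwoRegularOn_insert_insert_deleteEdges [DecidableEq V] (huv : u ≠ v) {t : Finset V}
    (hu : u ∉ t) (hv : v ∉ t) (ht : #t = 2) :
    IsTwoRegularOn (G.deleteEdges {s(u, v)}) (insert u (insert v t)) ↔
      ((∀ x ∈ t, G.Adj u x) ∧ ∀ x ∈ t, G.Adj v x) ∧ ¬ G.IsClique (t : Set V) := by
  obtain ⟨x, y, hxy, rfl⟩ := card_eq_two.1 ht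
  simp only [mem_insert, mem_singleton, not_or] at hu hv
  rw [isTwoRegularOn_quadruple huv hu.1 hu.2 hv.1 hv.2 hxy]
  have := G.adj_comm
  simp only [coe_pair, SimpleGraph.isClique_pair, mem_insert, mem_singleton, forall_eq_or_imp,
    forall_eq, deleteEdges_pair_adj]
  grind

end Counting

section Recursion

variable {V : Type*} [Fintype V] [DecidableEq V] {G : SimpleGraph V} {u v : V}

lemma subsetCount_deleteEdges (huv : u ≠ v) (k : ℕ) {p q : Finset V → Prop}
    (h : ∀ s, u ∉ s ∨ v ∉ s → (p s ↔ q s)) :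
    subsetCount univ (k + 2) p + subsetCount {u, v}ᶜ k (fun t ↦ q (insert u (insert v t))) =
      subsetCount univ (k + 2) q + subsetCount {u, v}ᶜ k (fun t ↦ p (insert u (insert v t))) := by
  rw [subsetCount_univ huv, subsetCount_univ huv,
    subsetCount_compl_pair_congr fun t hu _ _ ↦ h t (.inl hu),
    subsetCount_compl_pair_congr fun t _ hv _ ↦ h (insert u t) (.inr (by grind)),
    subsetCount_compl_pair_congr fun t hu _ _ ↦ h (insert v t) (.inl (by grind))]
  ring

theorem cliqueCount_deleteEdges (h : G.Adj u v) (k : ℕ) :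
    cliqueCount G (k + 2) =
      cliqueCount (G.deleteEdges {s(u, v)}) (k + 2) + commonCliqueCount G u v k := by
  have key := subsetCount_deleteEdges h.ne k fun s hs ↦ (isClique_deleteEdges (G := G) hs).symm
  rw [subsetCount_eq_zero fun t _ _ ↦ not_isClique_deleteEdges h.ne (by simp) (by simp), add_zero,
    subsetCount_compl_pair_congr fun t hu hv _ ↦ isClique_insert_insert h hu hv] at key
  exact key

lemma cliqueCount_deleteEdges_eq (huv : u ≠ v) (k : ℕ) :
    cliqueCount (G.deleteEdges {s(u, v)}) (k + 2) =
      subsetCount {u, v}ᶜ (k + 2) (fun t ↦ G.IsClique t) +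
      subsetCount {u, v}ᶜ (k + 1) (fun t ↦ G.IsClique t ∧ ∀ x ∈ t, G.Adj u x) +
      subsetCount {u, v}ᶜ (k + 1) (fun t ↦ G.IsClique t ∧ ∀ x ∈ t, G.Adj v x) := by
  rw [cliqueCount, subsetCount_univ huv,
    subsetCount_compl_pair_congr fun t hu _ _ ↦ isClique_deleteEdges (.inl hu),
    subsetCount_compl_pair_congr fun t hu _ _ ↦ isClique_insert_deleteEdges (by grind) hu,
    subsetCount_compl_pair_congr fun t _ hv _ ↦ isClique_insert_deleteEdges (by grind) hv,
    subsetCount_eq_zero fun t _ _ ↦ not_isClique_deleteEdges huv (by simp) (by simp), add_zero]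

lemma cliqueCount_contractEdge_eq (huv : u ≠ v) (k : ℕ) :
    cliqueCount (contractEdge G u v) (k + 2) =
      subsetCount {u, v}ᶜ (k + 2) (fun t ↦ G.IsClique t) +
      subsetCount {u, v}ᶜ (k + 1)
        (fun t ↦ G.IsClique t ∧ ∀ x ∈ t, G.Adj u x ∨ G.Adj v x) := by
  have insert_v : subsetCount {u, v}ᶜ (k + 1)
      (fun t ↦ (contractEdge G u v).IsClique (insert v t : Finset V)) = 0 :=
    subsetCount_eq_zero fun t ht htk ↦ not_isClique_contractEdge huv (mem_insert_self v t) <| by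
      rw [card_insert_of_notMem fun hv ↦ by simpa using ht hv]
      lia
  have insert_u_v : subsetCount {u, v}ᶜ k
      (fun t ↦ (contractEdge G u v).IsClique (insert u (insert v t) : Finset V)) = 0 :=
    subsetCount_eq_zero fun t _ _ ↦ not_isClique_contractEdge huv (by simp) <|
      one_lt_card.2 ⟨u, by simp, v, by simp, huv⟩
  rw [cliqueCount, subsetCount_univ huv, insert_v, insert_u_v,
    subsetCount_compl_pair_congr fun t hu hv _ ↦ isClique_contractEdge huv hu hv,
    subsetCount_compl_pair_congr fun t hu hv _ ↦ isClique_insert_contractEdge huv hu hv,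
    add_zero, add_zero]

theorem cliqueCount_contractEdge (huv : u ≠ v) (k : ℕ) :
    cliqueCount (contractEdge G u v) (k + 2) + commonCliqueCount G u v (k + 1) =
      cliqueCount (G.deleteEdges {s(u, v)}) (k + 2) + mixedCliqueCount G u v (k + 1) := by
  have inclusion_exclusion := subsetCount_add_subsetCount_and (A := {u, v}ᶜ) (k := k + 1)
    (p := fun t ↦ G.IsClique t ∧ ∀ x ∈ t, G.Adj u x)
    (q := fun t ↦ G.IsClique t ∧ ∀ x ∈ t, G.Adj v x)
    (r := fun t ↦ G.IsClique t ∧ ∀ x ∈ t, G.Adj u x ∨ G.Adj v x)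
    (fun t h ↦ ⟨h.1, fun x hx ↦ .inl (h.2 x hx)⟩) (fun t h ↦ ⟨h.1, fun x hx ↦ .inr (h.2 x hx)⟩)
  have common : commonCliqueCount G u v (k + 1) = subsetCount {u, v}ᶜ (k + 1) fun t ↦
      (G.IsClique t ∧ ∀ x ∈ t, G.Adj u x) ∧ (G.IsClique t ∧ ∀ x ∈ t, G.Adj v x) :=
    subsetCount_congr fun t _ _ ↦ by tauto
  have mixed : mixedCliqueCount G u v (k + 1) = subsetCount {u, v}ᶜ (k + 1) fun t ↦
      (G.IsClique t ∧ ∀ x ∈ t, G.Adj u x ∨ G.Adj v x) ∧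
        ¬ (G.IsClique t ∧ ∀ x ∈ t, G.Adj u x) ∧ ¬ (G.IsClique t ∧ ∀ x ∈ t, G.Adj v x) :=
    subsetCount_congr fun t _ _ ↦ by tauto
  rw [cliqueCount_contractEdge_eq huv, cliqueCount_deleteEdges_eq huv, common, mixed]
  lia

theorem fourCycleCount_deleteEdges (h : G.Adj u v) :
    fourCycleCount (G.deleteEdges {s(u, v)}) + mixedCliqueCount G u v 2 +
        commonCliqueCount G u v 2 =
      fourCycleCount G + (commonCliqueCount G u v 1).choose 2 := by
  have key := subsetCount_deleteEdges h.ne 2 (q := IsTwoRegularOn G)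
    fun s hs ↦ isTwoRegularOn_deleteEdges (G := G) hs
  rw [subsetCount_compl_pair_congr fun t hu hv ht ↦ isTwoRegularOn_insert_insert h hu hv ht,
    subsetCount_compl_pair_congr fun t hu hv ht ↦
      isTwoRegularOn_insert_insert_deleteEdges h.ne hu hv ht] at key
  have common_pairs : (commonCliqueCount G u v 1).choose 2 =
      subsetCount {u, v}ᶜ 2 fun t ↦ (∀ x ∈ t, G.Adj u x) ∧ ∀ x ∈ t, G.Adj v x := by
    simp only [← forall₂_and]
    rw [subsetCount_forall_mem, commonCliqueCount]
    refine congr_arg (Nat.choose · 2) (subsetCount_congr fun t _ ht ↦ ?_)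
    obtain ⟨x, rfl⟩ := card_eq_one.1 ht
    simp
  have common : commonCliqueCount G u v 2 = subsetCount {u, v}ᶜ 2 fun t ↦
      ((∀ x ∈ t, G.Adj u x) ∧ ∀ x ∈ t, G.Adj v x) ∧ G.IsClique t :=
    subsetCount_congr fun t _ _ ↦ by tauto
  have split := subsetCount_and_add_and_not (A := {u, v}ᶜ) (k := 2)
    (p := fun t ↦ (∀ x ∈ t, G.Adj u x) ∧ ∀ x ∈ t, G.Adj v x) (q := fun t ↦ G.IsClique t)
  rw [common_pairs, common]
  simp only [fourCycleCount, mixedCliqueCount]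
  lia

end Recursion

section Coefficients

variable {V : Type*} [Fintype V]

lemma commonCliqueCount_zero [DecidableEq V] (G : SimpleGraph V) (u v : V) :
    commonCliqueCount G u v 0 = 1 :=
  subsetCount_zero (by simp)

lemma mixedCliqueCount_one [DecidableEq V] (G : SimpleGraph V) (u v : V) :
    mixedCliqueCount G u v 1 = 0 :=
  subsetCount_eq_zero fun t _ ht ↦ by
    obtain ⟨x, rfl⟩ := card_eq_one.1 ht
    simp only [mem_singleton, forall_eq]
    tauto

theorem cliqueCount_two_deleteEdges {G : SimpleGraph V} {u v : V} (h : G.Adj u v) :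
    cliqueCount G 2 = cliqueCount (G.deleteEdges {s(u, v)}) 2 + 1 := by
  classical
  simpa only [commonCliqueCount_zero] using cliqueCount_deleteEdges h 0

theorem cliqueCount_two_contractEdge [DecidableEq V] {G : SimpleGraph V} {u v : V} (huv : u ≠ v) :
    cliqueCount (contractEdge G u v) 2 + commonCliqueCount G u v 1 =
      cliqueCount (G.deleteEdges {s(u, v)}) 2 := by
  simpa only [zero_add, mixedCliqueCount_one, add_zero] using
    cliqueCount_contractEdge (G := G) huv 0

theorem deletionContraction_induction {V : Type*} [Finite V] [DecidableEq V]
    {motive : SimpleGraph V → Prop} (bot : motive ⊥)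
    (step : ∀ G u v, G.Adj u v → motive (G.deleteEdges {s(u, v)}) → motive (contractEdge G u v) →
      motive G)
    (G : SimpleGraph V) : motive G := by
  have := Fintype.ofFinite V
  induction hm : cliqueCount G 2 using Nat.strong_induction_on generalizing G with
  | _ m ih =>
    by_cases hG : G = ⊥
    · exact hG ▸ bot
    obtain ⟨u, v, h⟩ := SimpleGraph.ne_bot_iff_exists_adj.1 hG
    have hdel := cliqueCount_two_deleteEdges h
    have hcon := cliqueCount_two_contractEdge (G := G) h.ne
    exact step G u v h (ih _ (by lia) _ rfl) (ih _ (by lia) _ rfl)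

theorem coeff_chromaticPolynomial_of_card_lt (G : SimpleGraph V) {j : ℕ}
    (hj : Fintype.card V < j) : (chromaticPolynomial G).coeff j = 0 := by
  classical
  induction G using deletionContraction_induction generalizing j with
  | bot => rw [chromaticPolynomial_bot, coeff_X_pow, if_neg hj.ne']
  | step G u v h ihdel ihcon =>
    rw [coeff_chromaticPolynomial h, ihdel hj, ihcon (by lia), sub_zero]

theorem coeff_chromaticPolynomial_card (G : SimpleGraph V) :
    (chromaticPolynomial G).coeff (Fintype.card V) = 1 := by
  classical
  induction G using deletionContraction_induction with
  | bot => rw [chromaticPolynomial_bot, coeff_X_pow_self]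
  | step G u v h ihdel _ =>
    rw [coeff_chromaticPolynomial h, ihdel, coeff_chromaticPolynomial_of_card_lt _ (by lia),
      sub_zero]

theorem coeff_chromaticPolynomial_of_card_eq_add_one (G : SimpleGraph V) {r : ℕ}
    (hr : Fintype.card V = r + 1) : (chromaticPolynomial G).coeff r = -(cliqueCount G 2 : ℤ) := by
  classical
  induction G using deletionContraction_induction with
  | bot => simp [chromaticPolynomial_bot, cliqueCount_bot, coeff_X_pow, hr]
  | step G u v h ihdel _ =>
    rw [coeff_chromaticPolynomial h, ihdel, ← hr, coeff_chromaticPolynomial_card,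
      cliqueCount_two_deleteEdges h]
    push_cast
    ring

theorem coeff_chromaticPolynomial_of_card_eq_add_two (G : SimpleGraph V) {r : ℕ}
    (hr : Fintype.card V = r + 2) :
    (chromaticPolynomial G).coeff r = ((cliqueCount G 2).choose 2 : ℤ) - cliqueCount G 3 := by
  classical
  induction G using deletionContraction_induction with
  | bot => simp [chromaticPolynomial_bot, cliqueCount_bot, coeff_X_pow, hr]
  | step G u v h ihdel _ =>
    rw [coeff_chromaticPolynomial h, ihdel, coeff_chromaticPolynomial_of_card_eq_add_one _ hr,
      cliqueCount_two_deleteEdges h, cliqueCount_deleteEdges h 1, Nat.choose_succ_succ' _ 1,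
      Nat.choose_one_right, ← cliqueCount_two_contractEdge h.ne]
    push_cast
    ring

lemma add_choose_two_add_choose_two (m n : ℕ) :
    ((m + n).choose 2 : ℤ) + n.choose 2 = m.choose 2 + n * (m + n - 1) := by
  have h : ((m + n).choose 2 : ℚ) + n.choose 2 = m.choose 2 + n * (m + n - 1) := by
    simp only [Nat.cast_choose_two, Nat.cast_add]
    ring
  exact_mod_cast h

theorem coeff_chromaticPolynomial_of_card_eq_add_three (G : SimpleGraph V) {r : ℕ}
    (hr : Fintype.card V = r + 3) :
    (chromaticPolynomial G).coeff r = -((cliqueCount G 2).choose 3 : ℤ) +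
      ((cliqueCount G 2 : ℤ) - 2) * cliqueCount G 3 + fourCycleCount G - 2 * cliqueCount G 4 := by
  classical
  induction G using deletionContraction_induction with
  | bot => simp [chromaticPolynomial_bot, cliqueCount_bot, fourCycleCount_bot, coeff_X_pow, hr]
  | step G u v h ihdel _ =>
    have triangles := cliqueCount_contractEdge (G := G) h.ne 1
    have fourCycles := fourCycleCount_deleteEdges h
    have binomials := add_choose_two_add_choose_two (cliqueCount (contractEdge G u v) 2)
      (commonCliqueCount G u v 1)
    rw [coeff_chromaticPolynomial h, ihdel, coeff_chromaticPolynomial_of_card_eq_add_two _ hr,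
      cliqueCount_two_deleteEdges h, cliqueCount_deleteEdges h 1, cliqueCount_deleteEdges h 2,
      Nat.choose_succ_succ' _ 2, ← cliqueCount_two_contractEdge h.ne]
    zify at triangles fourCycles
    push_cast
    linear_combination fourCycles + triangles + binomials

end Coefficients

section Invariants

variable {V : Type*} [Fintype V]

lemma numColorings_eq_card_coloring [DecidableEq V] (G : SimpleGraph V) [DecidableRel G.Adj]
    (k : ℕ) : G.numColorings k = Nat.card (G.Coloring (Fin k)) := by
  rw [SimpleGraph.numColorings, ← Nat.card_eq_fintype_card]
  exact Nat.card_congr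
    { toFun := fun f ↦ .mk f.1 fun {a b} ↦ f.2 a b
      invFun := fun C ↦ ⟨C, fun _ _ ↦ C.valid⟩
      left_inv := fun _ ↦ rfl
      right_inv := fun _ ↦ rfl }

lemma card_cliqueFinset [DecidableEq V] (G : SimpleGraph V) [DecidableRel G.Adj] (k : ℕ) :
    #(G.cliqueFinset k) = cliqueCount G k := by
  refine congr_arg card ?_
  ext s
  simp [SimpleGraph.mem_cliqueFinset_iff, SimpleGraph.isNClique_iff, and_comm]

lemma card_edgeFinset (G : SimpleGraph V) [Fintype G.edgeSet] :
    #G.edgeFinset = cliqueCount G 2 := by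
  classical
  refine card_nbij Sym2.toFinset (fun e he ↦ ?_) (fun e _ f _ h ↦ ?_) fun s hs ↦ ?_
  · induction e with | h x y => ?_
    have hxy : G.Adj x y := by simpa using he
    simp [Sym2.toFinset_mk_eq, hxy, hxy.ne]
  · ext x
    rw [← Sym2.mem_toFinset, h, Sym2.mem_toFinset]
  · simp only [coe_filter, mem_powersetCard, Set.mem_ofPred_eq] at hs
    obtain ⟨x, y, hxy, rfl⟩ := card_eq_two.1 hs.1.2
    exact ⟨s(x, y), by simpa using hs.2 (by simp) (by simp) hxy, Sym2.toFinset_mk_eq⟩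

lemma preconnected_of_card_lt_degree_add_degree (G : SimpleGraph V) [DecidableRel G.Adj]
    (h : ∀ u v, u ≠ v → ¬ G.Adj u v → Fintype.card V < G.degree u + G.degree v + 2) :
    G.Preconnected := by
  classical
  intro u v
  by_cases huv : u = v
  · exact huv ▸ .refl u
  by_cases hadj : G.Adj u v
  · exact hadj.reachable
  have card_compl : #({u, v}ᶜ : Finset V) < #(G.neighborFinset u) + #(G.neighborFinset v) := by
    have := card_compl_add_card ({u, v} : Finset V)
    rw [card_pair huv] at this
    have := h u v huv hadj
    simp only [SimpleGraph.card_neighborFinset_eq_degree]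
    lia
  have subset_compl {x y : V} (hxy : ¬ G.Adj x y) : G.neighborFinset x ⊆ {x, y}ᶜ := fun w hw ↦ by
    rw [SimpleGraph.mem_neighborFinset] at hw
    simp only [mem_compl, mem_insert, mem_singleton, not_or]
    exact ⟨hw.ne', fun h ↦ hxy (h ▸ hw)⟩
  obtain ⟨w, hw⟩ := inter_nonempty_of_card_lt_card_add_card (subset_compl hadj)
    (pair_comm u v ▸ subset_compl fun h ↦ hadj h.symm) card_compl
  have hw := mem_inter.1 hw
  simp only [SimpleGraph.mem_neighborFinset] at hw
  exact hw.1.reachable.trans hw.2.reachable.symm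

lemma card_neighborSet_induce {V : Type*} (G : SimpleGraph V) [DecidableRel G.Adj] (s : Finset V)
    (x : (s : Set V)) :
    Nat.card ((G.induce (s : Set V)).neighborSet x) = #{y ∈ s | G.Adj x y} := by
  classical
  rw [← Nat.card_eq_finsetCard]
  exact Nat.card_congr
    { toFun := fun y ↦ ⟨y.1.1, mem_filter.2 ⟨y.1.2, y.2⟩⟩
      invFun := fun y ↦ ⟨⟨y.1, (mem_filter.1 y.2).1⟩, (mem_filter.1 y.2).2⟩
      left_inv := fun _ ↦ rfl
      right_inv := fun _ ↦ rfl }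

lemma inducedFourCycleCount_eq (G : SimpleGraph V) :
    G.inducedFourCycleCount = fourCycleCount G := by
  classical
  have regular (s : Finset V) : (∀ x, Nat.card ((G.induce (s : Set V)).neighborSet x) = 2) ↔
      IsTwoRegularOn G s := by
    simp only [card_neighborSet_induce, IsTwoRegularOn]
    exact Subtype.forall
  have connected (s : Finset V) (hs : #s = 4) (h : IsTwoRegularOn G s) :
      (G.induce (s : Set V)).Connected := by
    have hne : Nonempty (s : Set V) := (card_pos.1 (by lia)).to_subtype
    refine ⟨preconnected_of_card_lt_degree_add_degree _ fun x y _ _ ↦ ?_⟩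
    have degree_eq (z : (s : Set V)) : (G.induce (s : Set V)).degree z = 2 := by
      rw [← SimpleGraph.card_neighborSet_eq_degree, ← Nat.card_eq_fintype_card]
      exact (regular s).2 h z
    rw [degree_eq, degree_eq]
    simp [hs]
  rw [SimpleGraph.inducedFourCycleCount, fourCycleCount, subsetCount]
  refine Nat.subtype_card _ fun s ↦ ?_
  rw [mem_filter, mem_powersetCard, regular]
  have := connected s
  simp only [subset_univ]
  tauto

end Invariants

end ChromaticPolynomial

open ChromaticPolynomial in
theorem chromaticPolynomial_first_four_coeffs_general {V : Type*} [Fintype V] [DecidableEq V]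
    (G : SimpleGraph V) [DecidableRel G.Adj] (P : Polynomial ℤ)
    (hP : ∀ k : ℕ, P.eval (k : ℤ) = G.numColorings k) (hn : 3 ≤ Fintype.card V) :
    P.coeff (Fintype.card V) = 1 ∧
    P.coeff (Fintype.card V - 1) = -(G.edgeFinset.card : ℤ) ∧
    P.coeff (Fintype.card V - 2) =
      (G.edgeFinset.card.choose 2 : ℤ) - ((G.cliqueFinset 3).card : ℤ) ∧
    P.coeff (Fintype.card V - 3) =
      -(G.edgeFinset.card.choose 3 : ℤ)
        + ((G.edgeFinset.card : ℤ) - 2) * ((G.cliqueFinset 3).card : ℤ)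
        + (G.inducedFourCycleCount : ℤ) - 2 * ((G.cliqueFinset 4).card : ℤ) := by
  obtain rfl : P = chromaticPolynomial G := eq_of_forall_eval_natCast fun k ↦ by
    rw [hP, eval_chromaticPolynomial, numColorings_eq_card_coloring]
  rw [card_edgeFinset, card_cliqueFinset, card_cliqueFinset, inducedFourCycleCount_eq]
  exact ⟨coeff_chromaticPolynomial_card G,
    coeff_chromaticPolynomial_of_card_eq_add_one G (by lia),
    coeff_chromaticPolynomial_of_card_eq_add_two G (by lia),
    coeff_chromaticPolynomial_of_card_eq_add_three G (by lia)⟩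

/-- The first four coefficients of the chromatic polynomial of a connected graph `G`
with `n ≥ 4` vertices and `m` edges: `c_n = 1`, `c_{n−1} = −m`,
`c_{n−2} = C(m,2) − t₁`, and `c_{n−3} = −C(m,3) + (m−2)t₁ + t₂ − 2t₃`, where `t₁` is the
number of triangles, `t₂` the number of induced 4-cycles and `t₃` the number of complete
subgraphs on 4 vertices. -/
theorem chromaticPolynomial_first_four_coeffs {V : Type*} [Fintype V] [DecidableEq V]
    (G : SimpleGraph V) [DecidableRel G.Adj] (P : Polynomial ℤ)
    (hP : ∀ k : ℕ, P.eval (k : ℤ) = G.numColorings k)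
    (hconn : G.Connected) (hn : 4 ≤ Fintype.card V) :
    P.coeff (Fintype.card V) = 1 ∧
    P.coeff (Fintype.card V - 1) = -(G.edgeFinset.card : ℤ) ∧
    P.coeff (Fintype.card V - 2) =
      (G.edgeFinset.card.choose 2 : ℤ) - ((G.cliqueFinset 3).card : ℤ) ∧
    P.coeff (Fintype.card V - 3) =
      -(G.edgeFinset.card.choose 3 : ℤ)
        + ((G.edgeFinset.card : ℤ) - 2) * ((G.cliqueFinset 3).card : ℤ)
        + (G.inducedFourCycleCount : ℤ) - 2 * ((G.cliqueFinset 4).card : ℤ) :=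
  chromaticPolynomial_first_four_coeffs_general G P hP (by lia)
end
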